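/- Let f_Normal(ξ | log y, y⁻¹) be the Gaussian density with mean log y and variance 1/y, and let f_logGamma(ξ | y, 1) be the log-Gamma density with parameters y and 1. Then the Kullback–Leibler divergence satisfies D(f_Normal(·|log y, y⁻¹) ‖ f_logGamma(·|y,1)) = 5/(24y) + O(y⁻²) as y → ∞; precisely, there exist constants C > 0 and Y₀ > 0 such that for all real y ≥ Y₀, |D(f_Normal(·|log y, y⁻¹) ‖ f_logGamma(·|y,1)) − 5/(24y)| ≤ C/y². -/

import Mathlib

open Real MeasureTheory

/-- Gaussian density with mean `m` and variance `v`. -/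
noncomputable def fNormal (m v ξ : ℝ) : ℝ :=
  (Real.sqrt (2 * Real.pi * v))⁻¹ * Real.exp (-(ξ - m) ^ 2 / (2 * v))

/-- log-Gamma density with parameters `r` and `s`. -/
noncomputable def fLogGamma (r s ξ : ℝ) : ℝ :=
  (Real.Gamma r * s ^ r)⁻¹ * Real.exp (r * ξ - Real.exp ξ / s)

/-- Kullback–Leibler divergence between densities `f` and `g` on `ℝ`. -/
noncomputable def KL (f g : ℝ → ℝ) : ℝ :=
  ∫ ξ : ℝ, f ξ * Real.log (f ξ / g ξ)

/-!
Integrating the logarithm of the ratio of the two densities against the Gaussian only involves its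
first two moments and its moment generating function, and gives the closed form
`D = μ(y) + (y (exp (1 / (2y)) - 1) - 1 / 2)`, where
`μ(y) = log Γ(y) - ((y - 1/2) log y - y + log (2π) / 2)` is the error in Stirling's formula.
The exponential contributes `1 / (8y) + O(y⁻²)`. For `μ`, the decrement
`μ(y) - μ(y + 1) = (y + 1/2) log (1 + 1/y) - 1` lies between the decrements of `1 / (12y + 6)` and
of `1 / (12y)`; all three functions tend to `0` along `y + ℕ`, so
`1 / (12y + 6) ≤ μ(y) ≤ 1 / (12y)`.
Finally `1/12 + 1/8 = 5/24`.
-/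

open Filter ProbabilityTheory
open scoped NNReal Topology

lemma le_of_sub_add_one_le_of_tendsto {f g : ℝ → ℝ} {x a : ℝ} (hx : 0 < x)
    (h : ∀ z > 0, f z - f (z + 1) ≤ g z - g (z + 1))
    (hf : Tendsto (fun n : ℕ ↦ f (x + n)) atTop (𝓝 a))
    (hg : Tendsto (fun n : ℕ ↦ g (x + n)) atTop (𝓝 a)) : f x ≤ g x := by
  have hanti : Antitone fun n : ℕ ↦ g (x + n) - f (x + n) := by
    refine antitone_nat_of_succ_le fun n ↦ ?_
    have := h (x + n) (by positivity)
    rw [Nat.cast_succ, ← add_assoc]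
    linarith
  simpa using hanti.le_of_tendsto (hg.sub hf) 0

section LogEstimates

variable {y : ℝ}

lemma hasSum_add_half_mul_log_one_add_inv_sub_one (hy : 0 < y) :
    HasSum (fun k : ℕ ↦ ((1 / (2 * y + 1)) ^ 2) ^ (k + 1) / (2 * (k + 1) + 1))
      ((y + 1 / 2) * log (1 + y⁻¹) - 1) := by
  have hlog := (hasSum_log_one_add_inv hy).mul_left (y + 1 / 2)
  convert! (hasSum_nat_add_iff' 1).2 hlog using 1
  · ext k
    rw [← pow_mul, pow_succ _ (2 * (k + 1))]
    push_cast
    field_simp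
  · rw [Finset.sum_range_one]
    congr 1
    push_cast
    field_simp
    norm_num

lemma add_half_mul_log_one_add_inv_sub_one_le (hy : 0 < y) :
    (y + 1 / 2) * log (1 + y⁻¹) - 1 ≤ 1 / (12 * y) - 1 / (12 * (y + 1)) := by
  set q : ℝ := (1 / (2 * y + 1)) ^ 2 with hq
  have hq1 : q < 1 := by
    rw [hq, sq_lt_one_iff₀ (by positivity), div_lt_one (by positivity)]
    linarith
  have hgeom : HasSum (fun k : ℕ ↦ q / 3 * q ^ k) (q / 3 * (1 - q)⁻¹) :=
    (hasSum_geometric_of_lt_one (sq_nonneg _) hq1).mul_left _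
  have hterm (k : ℕ) : q ^ (k + 1) / (2 * (k + 1) + 1) ≤ q / 3 * q ^ k :=
    calc q ^ (k + 1) / (2 * (k + 1) + 1) ≤ q ^ (k + 1) / 3 := by
          gcongr
          have := k.cast_nonneg (α := ℝ)
          linarith
      _ = q / 3 * q ^ k := by ring
  calc (y + 1 / 2) * log (1 + y⁻¹) - 1 ≤ q / 3 * (1 - q)⁻¹ :=
        hasSum_le hterm (hasSum_add_half_mul_log_one_add_inv_sub_one hy) hgeom
    _ = 1 / (12 * y) - 1 / (12 * (y + 1)) := by
        have h1q : 1 - q = 4 * y * (y + 1) / (2 * y + 1) ^ 2 := by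
          rw [hq]
          field_simp
          ring
        rw [h1q, hq]
        field_simp
        ring

lemma le_add_half_mul_log_one_add_inv_sub_one (hy : 0 < y) :
    1 / (12 * y + 6) - 1 / (12 * (y + 1) + 6) ≤ (y + 1 / 2) * log (1 + y⁻¹) - 1 := by
  have hfirst := le_hasSum (hasSum_add_half_mul_log_one_add_inv_sub_one hy) 0
    fun _ _ ↦ by positivity
  refine le_trans ?_ hfirst
  rw [div_sub_div _ _ (by positivity) (by positivity), zero_add, pow_one, div_pow, div_div,
    div_le_div_iff₀ (by positivity) (by positivity)]
  push_cast
  nlinarith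

lemma tendsto_add_mul_log_one_add_div (a t : ℝ) :
    Tendsto (fun z : ℝ ↦ (z + a) * log (1 + t / z)) atTop (𝓝 t) := by
  have hquot : Tendsto (fun z : ℝ ↦ 1 + t / z) atTop (𝓝 1) := by
    simpa using (tendsto_const_nhds (x := t)).div_atTop tendsto_id |>.const_add (1 : ℝ)
  have hlog : Tendsto (fun z : ℝ ↦ log (1 + t / z)) atTop (𝓝 0) := by
    simpa using hquot.log one_ne_zero
  simpa [add_mul] using (tendsto_mul_log_one_add_div_atTop t).add (hlog.const_mul a)

end LogEstimates

section Stirling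

variable {x y : ℝ}

lemma log_Gamma_add_one (hx : 0 < x) : log (Gamma (x + 1)) = log (Gamma x) + log x := by
  rw [Gamma_add_one hx.ne', log_mul hx.ne' (Gamma_pos_of_pos hx).ne', add_comm]

lemma log_Gamma_add_nat (hx : 0 < x) (n : ℕ) :
    log (Gamma (x + n)) = log (Gamma x) + ∑ k ∈ Finset.range n, log (x + k) := by
  induction n with
  | zero => simp
  | succ n ih =>
    rw [Finset.sum_range_succ, ← add_assoc, ← ih, Nat.cast_succ, ← add_assoc,
      log_Gamma_add_one (by positivity)]

/-- Binet's function: the error term of Stirling's formula for `log Γ(y)`, which carries all the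
Gamma-function asymptotics of the divergence. It is meaningful for `y > 0` only. -/
noncomputable def stirlingRemainder (y : ℝ) : ℝ :=
  log (Gamma y) - ((y - 1 / 2) * log y - y + log (2 * π) / 2)

lemma stirlingRemainder_sub_add_one (hy : 0 < y) :
    stirlingRemainder y - stirlingRemainder (y + 1) = (y + 1 / 2) * log (1 + y⁻¹) - 1 := by
  have hlog : log (1 + y⁻¹) = log (y + 1) - log y := by
    rw [← log_div (by positivity) hy.ne', add_div, div_self hy.ne', one_div]
  rw [stirlingRemainder, stirlingRemainder, log_Gamma_add_one hy, hlog]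
  ring

lemma stirlingRemainder_add_nat_succ (hx : 0 < x) {n : ℕ} (hn : n ≠ 0) :
    stirlingRemainder (x + (n + 1 : ℕ)) =
      (log (Gamma x) - BohrMollerup.logGammaSeq x n) +
        (log (Stirling.stirlingSeq n) - log √π) +
        ((x + 1) - (n + (x + 1 / 2)) * log (1 + (x + 1) / n)) := by
  have hn' : (0 : ℝ) < n := by positivity
  have hlog : log (x + (n + 1 : ℕ)) = log n + log (1 + (x + 1) / n) := by
    rw [← log_mul hn'.ne' (by positivity)]
    congr 1
    push_cast
    field_simp
    ring
  rw [stirlingRemainder, log_Gamma_add_nat hx, hlog, BohrMollerup.logGammaSeq,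
    Stirling.log_stirlingSeq_formula, log_sqrt pi_nonneg, log_mul two_ne_zero pi_ne_zero,
    log_mul two_ne_zero hn'.ne', log_div hn'.ne' (exp_ne_zero 1), log_exp]
  push_cast
  ring

lemma tendsto_stirlingRemainder_add_nat (hx : 0 < x) :
    Tendsto (fun n : ℕ ↦ stirlingRemainder (x + n)) atTop (𝓝 0) := by
  rw [← tendsto_add_atTop_iff_nat 1]
  have hGamma := (BohrMollerup.tendsto_log_gamma hx).const_sub (log (Gamma x))
  have hfact := (Stirling.tendsto_stirlingSeq_sqrt_pi.log (by positivity)).sub_const (log √π)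
  have hlog := ((tendsto_add_mul_log_one_add_div (x + 1 / 2) (x + 1)).comp
    tendsto_natCast_atTop_atTop).const_sub (x + 1)
  have hsum := (hGamma.add hfact).add hlog
  simp only [sub_self, add_zero] at hsum
  refine hsum.congr' ?_
  filter_upwards [eventually_ne_atTop 0] with n hn
  exact (stirlingRemainder_add_nat_succ hx hn).symm

lemma stirlingRemainder_le (hy : 0 < y) : stirlingRemainder y ≤ 1 / (12 * y) := by
  refine le_of_sub_add_one_le_of_tendsto (g := fun z ↦ 1 / (12 * z)) hy (fun z hz ↦ ?_)
    (tendsto_stirlingRemainder_add_nat hy) ?_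
  · exact (stirlingRemainder_sub_add_one hz).trans_le
      (add_half_mul_log_one_add_inv_sub_one_le hz)
  · exact tendsto_const_nhds.div_atTop <|
      (tendsto_atTop_add_const_left _ y tendsto_natCast_atTop_atTop).const_mul_atTop (by norm_num)

lemma le_stirlingRemainder (hy : 0 < y) : 1 / (12 * y + 6) ≤ stirlingRemainder y := by
  refine le_of_sub_add_one_le_of_tendsto (f := fun z ↦ 1 / (12 * z + 6)) hy (fun z hz ↦ ?_) ?_
    (tendsto_stirlingRemainder_add_nat hy)
  · exact (le_add_half_mul_log_one_add_inv_sub_one hz).trans_eq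
      (stirlingRemainder_sub_add_one hz).symm
  · exact tendsto_const_nhds.div_atTop <| tendsto_atTop_add_const_right _ 6 <|
      (tendsto_atTop_add_const_left _ y tendsto_natCast_atTop_atTop).const_mul_atTop (by norm_num)

lemma abs_stirlingRemainder_sub_le (hy : 0 < y) :
    |stirlingRemainder y - 1 / (12 * y)| ≤ 1 / 24 / y ^ 2 := by
  have hgap : 1 / (12 * y) - 1 / (12 * y + 6) ≤ 1 / 24 / y ^ 2 := by
    rw [div_sub_div _ _ (by positivity) (by positivity), div_div,
      div_le_div_iff₀ (by positivity) (by positivity)]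
    nlinarith [pow_pos hy 2]
  have hupper := stirlingRemainder_le hy
  have hlower := le_stirlingRemainder hy
  rw [abs_le]
  constructor <;> linarith [show 0 ≤ 1 / 24 / y ^ 2 by positivity]

end Stirling

section GaussianExpectations

variable {m v : ℝ}

lemma integral_sub_mean_sq_gaussianReal (m : ℝ) (v : ℝ≥0) :
    ∫ ξ, (ξ - m) ^ 2 ∂gaussianReal m v = v := by
  simpa [variance_eq_integral measurable_id'.aemeasurable] using
    variance_fun_id_gaussianReal (μ := m) (v := v)

lemma integrable_sub_sq_gaussianReal (m c : ℝ) (v : ℝ≥0) :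
    Integrable (fun ξ ↦ (ξ - c) ^ 2) (gaussianReal m v) :=
  ((memLp_id_gaussianReal 2).sub (memLp_const c)).integrable_sq

lemma integral_exp_gaussianReal (m : ℝ) (v : ℝ≥0) :
    ∫ ξ, exp ξ ∂gaussianReal m v = exp (m + v / 2) := by
  simpa [mgf] using congrFun (mgf_fun_id_gaussianReal (μ := m) (v := v)) 1

lemma integral_quadratic_add_exp_gaussianReal (m : ℝ) (v : ℝ≥0) (a b c d : ℝ) :
    ∫ ξ, (a - b * (ξ - m) ^ 2 - c * ξ + d * exp ξ) ∂gaussianReal m v =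
      a - b * v - c * m + d * exp (m + v / 2) := by
  have hconst : Integrable (fun _ ↦ a) (gaussianReal m v) := integrable_const a
  have hsq := (integrable_sub_sq_gaussianReal m m v).const_mul b
  have hid : Integrable (fun ξ ↦ c * ξ) (gaussianReal m v) :=
    ((memLp_id_gaussianReal 1).integrable (by simp)).const_mul c
  have hexp : Integrable (fun ξ ↦ d * exp ξ) (gaussianReal m v) := by
    simpa using (integrable_exp_mul_gaussianReal 1).const_mul d
  rw [integral_add ((hconst.sub' hsq).sub' hid) hexp,
    integral_sub (hconst.sub' hsq) hid, integral_sub hconst hsq, integral_const,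
    integral_const_mul, integral_const_mul, integral_const_mul,
    integral_sub_mean_sq_gaussianReal, integral_id_gaussianReal, integral_exp_gaussianReal,
    probReal_univ, one_smul]

lemma KL_fNormal_eq_integral_gaussianReal {v : ℝ≥0} (hv : v ≠ 0) (g : ℝ → ℝ) :
    KL (fNormal m v) g = ∫ ξ, log (fNormal m v ξ / g ξ) ∂gaussianReal m v :=
  (integral_gaussianReal_eq_integral_smul hv).symm

variable {r s : ℝ}

lemma log_fNormal_div_fLogGamma (hv : 0 < v) (hr : 0 < r) (hs : 0 < s) (ξ : ℝ) :
    log (fNormal m v ξ / fLogGamma r s ξ) =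
      log (Gamma r) + r * log s - log (2 * π * v) / 2 - (2 * v)⁻¹ * (ξ - m) ^ 2 - r * ξ
        + s⁻¹ * exp ξ := by
  have hΓ := Gamma_pos_of_pos hr
  rw [fNormal, fLogGamma, log_div (by positivity) (by positivity),
    log_mul (by positivity) (exp_ne_zero _), log_mul (by positivity) (exp_ne_zero _), log_inv,
    log_inv, log_exp, log_exp, log_sqrt (by positivity), log_mul hΓ.ne' (by positivity),
    log_rpow hs]
  ring

lemma KL_fNormal_fLogGamma (hv : 0 < v) (hr : 0 < r) (hs : 0 < s) :
    KL (fNormal m v) (fLogGamma r s) =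
      log (Gamma r) + r * log s - log (2 * π * v) / 2 - 1 / 2 - r * m + exp (m + v / 2) / s := by
  lift v to ℝ≥0 using hv.le
  have hv0 : v ≠ 0 := by exact_mod_cast hv.ne'
  rw [KL_fNormal_eq_integral_gaussianReal hv0]
  simp only [log_fNormal_div_fLogGamma hv hr hs]
  rw [integral_quadratic_add_exp_gaussianReal]
  field_simp

end GaussianExpectations

section Asymptotics

variable {y : ℝ}

lemma KL_fNormal_log_inv_fLogGamma_one (hy : 0 < y) :
    KL (fNormal (log y) y⁻¹) (fLogGamma y 1) =
      stirlingRemainder y + (y * (exp (1 / (2 * y)) - 1) - 1 / 2) := by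
  have hexp : exp (log y + y⁻¹ / 2) = y * exp (1 / (2 * y)) := by
    rw [exp_add, exp_log hy]
    congr 2
    field_simp
  rw [KL_fNormal_fLogGamma (inv_pos.2 hy) hy one_pos, hexp, stirlingRemainder, log_one,
    log_mul (by positivity) (by positivity), log_inv]
  ring

lemma abs_exp_sub_quadratic_le {x : ℝ} (hx : |x| ≤ 1) :
    |exp x - (1 + x + x ^ 2 / 2)| ≤ 2 / 9 * |x| ^ 3 := by
  calc |exp x - (1 + x + x ^ 2 / 2)| = |exp x - ∑ k ∈ Finset.range 3, x ^ k / k.factorial| := by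
        simp [Finset.sum_range_succ]
    _ ≤ |x| ^ 3 * (Nat.succ 3 / (Nat.factorial 3 * (3 : ℕ))) := exp_bound hx (by norm_num)
    _ = 2 / 9 * |x| ^ 3 := by norm_num [Nat.factorial, mul_comm]

lemma abs_mul_exp_sub_one_sub_le (hy : 1 / 2 ≤ y) :
    |y * (exp (1 / (2 * y)) - 1) - 1 / 2 - 1 / (8 * y)| ≤ 1 / 36 / y ^ 2 := by
  have hy0 : 0 < y := by linarith
  set x : ℝ := 1 / (2 * y) with hx
  have hx0 : 0 < x := by positivity
  have hx1 : x ≤ 1 := (div_le_one (by positivity)).2 (by linarith)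
  have hfactor : y * (exp x - 1) - 1 / 2 - 1 / (8 * y) = y * (exp x - (1 + x + x ^ 2 / 2)) := by
    rw [hx]
    field_simp
    ring
  calc |y * (exp x - 1) - 1 / 2 - 1 / (8 * y)| = y * |exp x - (1 + x + x ^ 2 / 2)| := by
        rw [hfactor, abs_mul, abs_of_pos hy0]
    _ ≤ y * (2 / 9 * |x| ^ 3) := by
        gcongr
        exact abs_exp_sub_quadratic_le (by rwa [abs_of_pos hx0])
    _ = 1 / 36 / y ^ 2 := by
        rw [abs_of_pos hx0, hx]
        field_simp
        norm_num

end Asymptotics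

theorem kl_normal_logGamma_asymptotic :
    ∃ C > (0 : ℝ), ∃ Y₀ > (0 : ℝ), ∀ y : ℝ, Y₀ ≤ y →
      |KL (fNormal (Real.log y) y⁻¹) (fLogGamma y 1) - 5 / (24 * y)| ≤ C / y ^ 2 := by
  refine ⟨1 / 24 + 1 / 36, by norm_num, 1 / 2, by norm_num, fun y hy ↦ ?_⟩
  have hy0 : 0 < y := by linarith
  have hsplit : KL (fNormal (log y) y⁻¹) (fLogGamma y 1) - 5 / (24 * y) =
      (stirlingRemainder y - 1 / (12 * y)) +
        (y * (exp (1 / (2 * y)) - 1) - 1 / 2 - 1 / (8 * y)) := by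
    rw [KL_fNormal_log_inv_fLogGamma_one hy0]
    field_simp
    ring
  calc |KL (fNormal (log y) y⁻¹) (fLogGamma y 1) - 5 / (24 * y)|
      ≤ |stirlingRemainder y - 1 / (12 * y)| +
          |y * (exp (1 / (2 * y)) - 1) - 1 / 2 - 1 / (8 * y)| := by
        rw [hsplit]
        exact abs_add_le _ _
    _ ≤ 1 / 24 / y ^ 2 + 1 / 36 / y ^ 2 :=
        add_le_add (abs_stirlingRemainder_sub_le hy0) (abs_mul_exp_sub_one_sub_le hy)
    _ = (1 / 24 + 1 / 36) / y ^ 2 := by ring
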